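/- (Theorem: feasibility error of Pro-DUCA) Suppose the problem setup holds and the sequences (x^k)_{k≥0}, (y^k)_{k≥0}, (z^k)_{k≥0} are generated by Pro-DUCA (no compactness of the X_i is assumed). Then for every k ≥ 1, the Euclidean norm of the vector ( [Σ_{i=1}^N g_i(x̄_i^k)]_+ , Σ_{i=1}^N h_i(x̄_i^k) ) ∈ ℝ^{m+p} is at most (√(N·λ_1(P_A))/k)·(‖y^0‖_A + C_1 + C_2), where C_1 := √(N·λ_1(P_A))·‖y°‖, C_2 := ((‖y^0‖_A + C_1)² + α‖x^0 − x*‖² + (1/ρ)·(v^0 − v*)ᵀH̃†(v^0 − v*))^{1/2}, and [w]_+ denotes the componentwise maximum of w with 0. -/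

import Mathlib

open Matrix
open scoped Kronecker

abbrev Blk (m p : ℕ) := Sum (Fin m) (Fin p)
abbrev Idx (N m p : ℕ) := Fin N × Blk m p

def projK {N m p : ℕ} (y : Idx N m p → ℝ) : Idx N m p → ℝ :=
  fun ij =>
    match ij with
    | (i, Sum.inl j) => max (y (i, Sum.inl j)) 0
    | (i, Sum.inr j) => y (i, Sum.inr j)

def projKpolar {N m p : ℕ} (y : Idx N m p → ℝ) : Idx N m p → ℝ :=
  fun ij =>
    match ij with
    | (i, Sum.inl j) => min (y (i, Sum.inl j)) 0
    | (_, Sum.inr _) => 0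

def memK {N m p : ℕ} (y : Idx N m p → ℝ) : Prop :=
  ∀ (i : Fin N) (j : Fin m), 0 ≤ y (i, Sum.inl j)

def IsMPInv {n : Type*} [Fintype n] [DecidableEq n] (M Md : Matrix n n ℝ) : Prop :=
  M * Md * M = M ∧ Md * M * Md = Md ∧ (M * Md)ᵀ = M * Md ∧ (Md * M)ᵀ = Md * M

def quadForm {n : Type*} [Fintype n] (M : Matrix n n ℝ) (w : n → ℝ) : ℝ :=
  w ⬝ᵥ (M *ᵥ w)

section Helpers

open scoped MatrixOrder

theorem aux_limit (b c : ℝ) (h : ∀ t : ℝ, 0 < t → t ≤ 1 → 0 ≤ t * b + t ^ 2 * c) : 0 ≤ b := by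
  by_contra hb
  push Not at hb
  have hc : 0 ≤ |c| := abs_nonneg c
  have hpos : 0 < |c| - b + 1 := by linarith
  have h1 := h (-b / (|c| - b + 1)) (by apply div_pos <;> linarith)
    (by rw [div_le_one hpos]; linarith)
  set t := -b / (|c| - b + 1) with ht
  have htp : 0 < t := by apply div_pos <;> linarith
  have h2 : t * (|c| - b + 1) = -b := by rw [ht]; field_simp
  have h3 : 0 ≤ b + t * c := by
    have : 0 ≤ t * (b + t * c) := by linarith [h1, sq t, (by ring : t * (b + t * c) = t * b + t ^ 2 * c)]
    exact nonneg_of_mul_nonneg_right this htp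
  have h4 : t * c ≤ t * |c| := mul_le_mul_of_nonneg_left (le_abs_self c) htp.le
  nlinarith [mul_pos htp (by linarith : 0 < -b)]

theorem aux_max (a b s : ℝ) (h : b ≤ a + s) :
    (max b 0) ^ 2 ≤ (max a 0) ^ 2 + 2 * (max a 0) * s + s ^ 2 := by
  rcases le_total b 0 with hb | hb
  · rw [max_eq_right hb]
    nlinarith [sq_nonneg (max a 0 + s)]
  · rw [max_eq_left hb]
    have : a ≤ max a 0 := le_max_left _ _
    nlinarith

theorem qf_exists {n : Type*} [Fintype n] [DecidableEq n] (A : Matrix n n ℝ) (hA : A.PosSemidef) :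
    ∃ Φ : (n → ℝ) →ₗ[ℝ] EuclideanSpace ℝ n,
      ∀ u w, u ⬝ᵥ (A *ᵥ w) = inner ℝ (Φ u) (Φ w) := by
  obtain ⟨B, hB⟩ := CStarAlgebra.nonneg_iff_eq_star_mul_self.mp (Matrix.nonneg_iff_posSemidef.mpr hA)
  refine ⟨(WithLp.linearEquiv 2 ℝ (n → ℝ)).symm.toLinearMap ∘ₗ Matrix.mulVecLin B, ?_⟩
  intro u w
  rw [hB, Matrix.star_eq_conjTranspose, Matrix.conjTranspose_eq_transpose_of_trivial,
    ← Matrix.mulVec_mulVec, Matrix.dotProduct_mulVec, Matrix.vecMul_transpose]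
  simp [LinearMap.comp_apply, EuclideanSpace.inner_eq_star_dotProduct, dotProduct_comm]

theorem qf_nonneg {n : Type*} [Fintype n] [DecidableEq n] (A : Matrix n n ℝ) (hA : A.PosSemidef)
    (w : n → ℝ) : 0 ≤ quadForm A w := by
  obtain ⟨Φ, h⟩ := qf_exists A hA
  rw [quadForm, h]
  exact real_inner_self_nonneg

theorem qf_cs {n : Type*} [Fintype n] [DecidableEq n] (A : Matrix n n ℝ) (hA : A.PosSemidef)
    (u w : n → ℝ) : u ⬝ᵥ (A *ᵥ w) ≤ Real.sqrt (quadForm A u) * Real.sqrt (quadForm A w) := by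
  obtain ⟨Φ, h⟩ := qf_exists A hA
  simp only [quadForm, h, real_inner_self_eq_norm_sq, Real.sqrt_sq (norm_nonneg _)]
  exact real_inner_le_norm _ _

theorem qf_tri {n : Type*} [Fintype n] [DecidableEq n] (A : Matrix n n ℝ) (hA : A.PosSemidef)
    (u w : n → ℝ) :
    Real.sqrt (quadForm A (u - w)) ≤ Real.sqrt (quadForm A u) + Real.sqrt (quadForm A w) := by
  obtain ⟨Φ, h⟩ := qf_exists A hA
  simp only [quadForm, h, real_inner_self_eq_norm_sq, Real.sqrt_sq (norm_nonneg _), map_sub]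
  exact norm_sub_le _ _

theorem dot_symm {n : Type*} [Fintype n] (A : Matrix n n ℝ) (hA : Aᵀ = A)
    (u w : n → ℝ) : u ⬝ᵥ (A *ᵥ w) = (A *ᵥ u) ⬝ᵥ w := by
  rw [Matrix.dotProduct_mulVec, ← Matrix.mulVec_transpose, hA]

/-- `2 ⟨a, A (a - b)⟩ = ‖a‖² - ‖b‖² + ‖a-b‖²`. -/
theorem qf_polar {n : Type*} [Fintype n] [DecidableEq n] (A : Matrix n n ℝ) (hA : Aᵀ = A)
    (a b : n → ℝ) :
    2 * (a ⬝ᵥ (A *ᵥ (a - b))) = quadForm A a - quadForm A b + quadForm A (a - b) := by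
  have h : b ⬝ᵥ (A *ᵥ a) = a ⬝ᵥ (A *ᵥ b) := by rw [dot_symm A hA, dotProduct_comm]
  simp only [quadForm, Matrix.mulVec_sub, dotProduct_sub, sub_dotProduct, h]
  ring

theorem psd_symm {n : Type*} [Fintype n] [DecidableEq n] (A : Matrix n n ℝ) (hA : A.PosSemidef) :
    Aᵀ = A := by
  have := hA.1
  rwa [Matrix.IsHermitian, Matrix.conjTranspose_eq_transpose_of_trivial] at this

theorem rayleigh {N : ℕ} (PA : Matrix (Fin N) (Fin N) ℝ) (hPA : PA.PosSemidef) (lam1 : ℝ)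
    (hmax : ∀ (μ : ℝ) (v : Fin N → ℝ), v ≠ 0 → PA *ᵥ v = μ • v → μ ≤ lam1) (w : Fin N → ℝ) :
    w ⬝ᵥ (PA *ᵥ w) ≤ lam1 * (w ⬝ᵥ w) := by
  have hH : (lam1 • (1 : Matrix (Fin N) (Fin N) ℝ) - PA).IsHermitian := by
    apply Matrix.IsHermitian.sub _ hPA.1
    rw [Matrix.IsHermitian, Matrix.conjTranspose_smul]
    simp
  have hp : (lam1 • (1 : Matrix (Fin N) (Fin N) ℝ) - PA).PosSemidef := by
    rw [hH.posSemidef_iff_eigenvalues_nonneg]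
    intro i
    have he := hH.mulVec_eigenvectorBasis i
    have hne : (⇑(hH.eigenvectorBasis i) : Fin N → ℝ) ≠ 0 := by
      intro h0
      have := hH.eigenvectorBasis.orthonormal.ne_zero i
      apply this
      ext j
      exact congrFun h0 j
    have := hmax (lam1 - hH.eigenvalues i) _ hne (by
      rw [sub_smul, ← he, Matrix.sub_mulVec, Matrix.smul_mulVec, Matrix.one_mulVec]
      abel)
    simp only [Pi.zero_apply]
    linarith
  have := qf_nonneg _ hp w
  rw [quadForm, Matrix.sub_mulVec, Matrix.smul_mulVec, Matrix.one_mulVec, dotProduct_sub,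
    dotProduct_smul, smul_eq_mul] at this
  linarith

theorem kron_mulVec {N : ℕ} {β : Type*} [Fintype β] [DecidableEq β]
    (P : Matrix (Fin N) (Fin N) ℝ) (w : Fin N × β → ℝ)
    (i : Fin N) (j : β) :
    ((P ⊗ₖ (1 : Matrix β β ℝ)) *ᵥ w) (i, j) = (P *ᵥ fun i' => w (i', j)) i := by
  simp only [Matrix.mulVec, dotProduct, Fintype.sum_prod_type, Matrix.kroneckerMap_apply]
  refine Finset.sum_congr rfl fun i' _ => ?_
  simp [Matrix.one_apply]

theorem kron_psd {N : ℕ} {β : Type*} [Fintype β] [DecidableEq β]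
    (P : Matrix (Fin N) (Fin N) ℝ) (hP : P.PosSemidef) :
    (P ⊗ₖ (1 : Matrix β β ℝ)).PosSemidef :=
  hP.kronecker Matrix.PosSemidef.one

theorem kron_const {N : ℕ} {β : Type*} [Fintype β] [DecidableEq β]
    (P : Matrix (Fin N) (Fin N) ℝ)
    (hP : ∀ v : Fin N → ℝ, P *ᵥ v = 0 ↔ ∃ t : ℝ, v = fun _ => t) (r : β → ℝ) :
    (P ⊗ₖ (1 : Matrix β β ℝ)) *ᵥ (fun e => r e.2) = 0 := by
  ext ⟨i, j⟩
  rw [kron_mulVec]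
  have := (hP (fun _ => r j)).2 ⟨r j, rfl⟩
  exact congrFun this i

theorem kron_ker {N : ℕ} {β : Type*} [Fintype β] [DecidableEq β]
    (P : Matrix (Fin N) (Fin N) ℝ)
    (hP : ∀ v : Fin N → ℝ, P *ᵥ v = 0 ↔ ∃ t : ℝ, v = fun _ => t) (n : Fin N × β → ℝ)
    (hn : (P ⊗ₖ (1 : Matrix β β ℝ)) *ᵥ n = 0) : ∃ r : β → ℝ, n = fun e => r e.2 := by
  have : ∀ j, ∃ t : ℝ, (fun i => n (i, j)) = fun _ => t := by
    intro j
    rw [← hP]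
    ext i
    rw [← kron_mulVec, hn]; rfl
  choose r hr using this
  exact ⟨r, by ext ⟨i, j⟩; exact congrFun (hr j) i⟩

theorem const_dot {N : ℕ} {β : Type*} [Fintype β] (r : β → ℝ) (w : Fin N × β → ℝ) :
    (fun e : Fin N × β => r e.2) ⬝ᵥ w = ∑ j, r j * ∑ i, w (i, j) := by
  simp only [dotProduct, Fintype.sum_prod_type_right, Finset.mul_sum]

theorem kron_rayleigh {N : ℕ} {β : Type*} [Fintype β] [DecidableEq β]
    (PA : Matrix (Fin N) (Fin N) ℝ) (hPA : PA.PosSemidef) (lam1 : ℝ)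
    (hmax : ∀ (μ : ℝ) (v : Fin N → ℝ), v ≠ 0 → PA *ᵥ v = μ • v → μ ≤ lam1) (r : β → ℝ) :
    quadForm (PA ⊗ₖ (1 : Matrix β β ℝ)) (fun e => r e.2) ≤ (N * lam1) * ∑ j, r j ^ 2 := by
  rw [quadForm, const_dot, Finset.mul_sum]
  refine Finset.sum_le_sum fun j _ => ?_
  have h := rayleigh PA hPA lam1 hmax (fun _ => r j)
  simp only [kron_mulVec]
  simp only [dotProduct, Finset.sum_const, Finset.card_univ, Fintype.card_fin, nsmul_eq_mul] at h
  rw [← Finset.mul_sum] at h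
  linarith [h]

theorem lam1_nonneg {N : ℕ} (PA : Matrix (Fin N) (Fin N) ℝ) (hPA : PA.PosSemidef) (lam1 : ℝ)
    (hlam1ev : ∃ v : Fin N → ℝ, v ≠ 0 ∧ PA *ᵥ v = lam1 • v) : 0 ≤ lam1 := by
  obtain ⟨v, hv, he⟩ := hlam1ev
  have h := qf_nonneg PA hPA v
  rw [quadForm, he, dotProduct_smul, smul_eq_mul] at h
  have : 0 < v ⬝ᵥ v := by
    have h0 : 0 ≤ v ⬝ᵥ v := Finset.sum_nonneg fun i _ => mul_self_nonneg _
    exact lt_of_le_of_ne h0 fun h => hv (dotProduct_self_eq_zero.mp h.symm)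
  exact nonneg_of_mul_nonneg_left h this

/-- `‖(1ᵀ ⊗ I) A w‖ ≤ √(N λ₁) ‖w‖_A`. -/
theorem col_bound {N : ℕ} {β : Type*} [Fintype β] [DecidableEq β]
    (PA : Matrix (Fin N) (Fin N) ℝ) (hPA : PA.PosSemidef) (lam1 : ℝ)
    (hmax : ∀ (μ : ℝ) (v : Fin N → ℝ), v ≠ 0 → PA *ᵥ v = μ • v → μ ≤ lam1)
    (hl : 0 ≤ lam1) (w : Fin N × β → ℝ) :
    Real.sqrt (∑ j, (∑ i, ((PA ⊗ₖ (1 : Matrix β β ℝ)) *ᵥ w) (i, j)) ^ 2)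
      ≤ Real.sqrt (N * lam1) * Real.sqrt (quadForm (PA ⊗ₖ (1 : Matrix β β ℝ)) w) := by
  set A := PA ⊗ₖ (1 : Matrix β β ℝ) with hA
  set r : β → ℝ := fun j => ∑ i, (A *ᵥ w) (i, j) with hr
  have h1 := const_dot r (A *ᵥ w)
  have h2 := qf_cs A (kron_psd PA hPA) (fun e => r e.2) w
  have h3 := Real.sqrt_le_sqrt (kron_rayleigh PA hPA lam1 hmax r)
  rw [Real.sqrt_mul (by positivity)] at h3
  have h4 : ∑ j, r j * ∑ i, (A *ᵥ w) (i, j) = Real.sqrt (∑ j, r j ^ 2) ^ 2 := by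
    rw [Real.sq_sqrt (Finset.sum_nonneg fun _ _ => sq_nonneg _)]
    exact Finset.sum_congr rfl fun j _ => (sq _).symm
  rw [h1, h4] at h2
  set S := Real.sqrt (∑ j, r j ^ 2) with hS
  set T := Real.sqrt (quadForm A w)
  have hS0 : 0 ≤ S := Real.sqrt_nonneg _
  have hT0 : 0 ≤ T := Real.sqrt_nonneg _
  have h5 : S ^ 2 ≤ Real.sqrt (N * lam1) * S * T := h2.trans (mul_le_mul_of_nonneg_right h3 hT0)
  rcases hS0.eq_or_lt with h0 | h0
  · change S ≤ _
    rw [← h0]; positivity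
  · change S ≤ _
    have : S * S ≤ S * (Real.sqrt (N * lam1) * T) := by nlinarith
    exact le_of_mul_le_mul_left this h0

theorem mp_range {n : Type*} [Fintype n] [DecidableEq n] (M Md : Matrix n n ℝ) (hM : Mᵀ = M)
    (h : IsMPInv M Md) : M = M * M * Mdᵀ := by
  obtain ⟨h1, -, -, h4⟩ := h
  rw [Matrix.transpose_mul, hM] at h4
  rw [Matrix.mul_assoc M M, h4, ← Matrix.mul_assoc, h1]

theorem mp_proj {n : Type*} [Fintype n] [DecidableEq n] (M Md : Matrix n n ℝ) (hM : Mᵀ = M)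
    (h : IsMPInv M Md) : M * (M * Md) = M := by
  obtain ⟨h1, -, h3, -⟩ := h
  have : (M * Md * M)ᵀ = M * (M * Md) := by rw [Matrix.transpose_mul, hM, h3]
  rw [← this, h1, hM]

end Helpers
section Steps

theorem diag_D {N : ℕ} {β : Type*} [Fintype β] [DecidableEq β] (Q : Matrix (Fin N) (Fin N) ℝ)
    (hdiag : Q.IsDiag) (hpd : Q.PosDef) :
    ∃ δ : Fin N × β → ℝ, (∀ e, 0 < δ e) ∧ Q ⊗ₖ (1 : Matrix β β ℝ) = Matrix.diagonal δ ∧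
      (Q ⊗ₖ (1 : Matrix β β ℝ))⁻¹ = Matrix.diagonal (fun e => (δ e)⁻¹) := by
  have h1 : Q ⊗ₖ (1 : Matrix β β ℝ) = Matrix.diagonal (fun e : Fin N × β => Q e.1 e.1) := by
    ext ⟨i, j⟩ ⟨i', j'⟩
    rw [Matrix.kroneckerMap_apply, Matrix.diagonal_apply, Matrix.one_apply]
    by_cases hi : i = i'
    · subst hi
      by_cases hj : j = j' <;> simp [hj]
    · have := hdiag hi
      simp [this, hi]
  have hpos : ∀ e : Fin N × β, 0 < Q e.1 e.1 := fun e => hpd.diag_pos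
  refine ⟨fun e => Q e.1 e.1, hpos, h1, ?_⟩
  rw [h1]
  apply Matrix.inv_eq_left_inv
  rw [Matrix.diagonal_mul_diagonal, ← Matrix.diagonal_one]
  congr 1
  ext e
  exact inv_mul_cancel₀ (hpos e).ne'

/-- Properties of the `y` update: `D y⁺ = a + σ`. -/
theorem y_step {N m p : ℕ} (δ a y : Idx N m p → ℝ) (hδ : ∀ e, 0 < δ e)
    (hy : y = projK (Matrix.diagonal (fun e => (δ e)⁻¹) *ᵥ a)) :
    memK y ∧ (∀ e, y e = (δ e)⁻¹ * projK a e) ∧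
    ∃ s : Idx N m p → ℝ, memK s ∧ (∀ i j, s (i, Sum.inr j) = 0) ∧ (∀ e, y e * s e = 0) ∧
      Matrix.diagonal δ *ᵥ y = a + s := by
  have hy2 : ∀ e, y e = (δ e)⁻¹ * projK a e := by
    rintro ⟨i, j | j⟩
    · simp only [hy, projK, Matrix.mulVec_diagonal]
      rw [mul_max_of_nonneg _ _ (inv_nonneg.2 (hδ _).le), mul_zero]
    · simp only [hy, projK, Matrix.mulVec_diagonal]
  have hyK : memK y := by
    intro i j
    rw [hy2]
    exact mul_nonneg (inv_nonneg.2 (hδ _).le) (le_max_right _ _)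
  refine ⟨hyK, hy2, fun e => projK a e - a e, ?_, ?_, ?_, ?_⟩
  · intro i j
    simp only [projK]
    linarith [le_max_left (a (i, Sum.inl j)) 0]
  · intro i j
    simp only [projK]; ring
  · rintro ⟨i, j | j⟩
    · rw [hy2]
      simp only [projK]
      rcases le_total (a (i, Sum.inl j)) 0 with h | h
      · rw [max_eq_right h]; ring
      · rw [max_eq_left h]; ring
    · simp only [projK]; ring
  · ext e
    simp only [Matrix.mulVec_diagonal, Pi.add_apply, hy2]
    rw [mul_inv_cancel_left₀ (hδ e).ne']; ring

/-- Optimality of the `x` update. -/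
theorem x_step {N m p : ℕ} (d : Fin N → ℕ)
    (X : ∀ i : Fin N, Set (Fin (d i) → ℝ))
    (hXcv : ∀ i, Convex ℝ (X i))
    (f : ∀ i : Fin N, (Fin (d i) → ℝ) → ℝ)
    (hf : ∀ i, ConvexOn ℝ Set.univ (f i))
    (g : ∀ i : Fin N, (Fin (d i) → ℝ) → Fin m → ℝ)
    (hg : ∀ i j, ConvexOn ℝ Set.univ (fun xi => g i xi j))
    (B : ∀ i : Fin N, Matrix (Fin p) (Fin (d i)) ℝ) (c : ∀ i : Fin N, Fin p → ℝ)
    (F : (∀ i, Fin (d i) → ℝ) → ℝ) (hF : ∀ x, F x = ∑ i, f i (x i))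
    (tg : (∀ i, Fin (d i) → ℝ) → Idx N m p → ℝ)
    (htg1 : ∀ x (i : Fin N) (j : Fin m), tg x (i, Sum.inl j) = g i (x i) j)
    (htg2 : ∀ x (i : Fin N) (j : Fin p), tg x (i, Sum.inr j) = (B i *ᵥ x i + c i) j)
    (δ u y : Idx N m p → ℝ) (hδ : ∀ e, 0 < δ e)
    (x0 x1 : ∀ i, Fin (d i) → ℝ) (hx1 : ∀ i, x1 i ∈ X i)
    (hy : ∀ e, y e = (δ e)⁻¹ * projK (u + tg x1) e)
    (α : ℝ)
    (hmin : ∀ w, (∀ i, w i ∈ X i) →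
      F x1 + (1 / 2) * quadForm (Matrix.diagonal (fun e => (δ e)⁻¹)) (projK (u + tg x1))
          + (α / 2) * ∑ i, ∑ j, (x1 i j - x0 i j) ^ 2
        ≤ F w + (1 / 2) * quadForm (Matrix.diagonal (fun e => (δ e)⁻¹)) (projK (u + tg w))
          + (α / 2) * ∑ i, ∑ j, (w i j - x0 i j) ^ 2)
    (w : ∀ i, Fin (d i) → ℝ) (hw : ∀ i, w i ∈ X i) :
    F x1 + y ⬝ᵥ tg x1 + (α / 2) * ((∑ i, ∑ j, (x1 i j - x0 i j) ^ 2)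
      + (∑ i, ∑ j, (x1 i j - w i j) ^ 2) - ∑ i, ∑ j, (x0 i j - w i j) ^ 2)
      ≤ F w + y ⬝ᵥ tg w := by
  have hqf : ∀ v : Idx N m p → ℝ, quadForm (Matrix.diagonal (fun e => (δ e)⁻¹)) v
      = ∑ e, (δ e)⁻¹ * v e ^ 2 := by
    intro v
    simp only [quadForm, dotProduct, Matrix.mulVec_diagonal]
    exact Finset.sum_congr rfl fun e _ => by ring
  simp only [hqf] at hmin
  have key : 0 ≤ F w - F x1 + (y ⬝ᵥ tg w - y ⬝ᵥ tg x1)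
      + α * ∑ i, ∑ j, (x1 i j - x0 i j) * (w i j - x1 i j) := by
    apply aux_limit _ (1 / 2 * (∑ e, (δ e)⁻¹ * (tg w e - tg x1 e) ^ 2)
      + α / 2 * ∑ i, ∑ j, (w i j - x1 i j) ^ 2)
    intro t ht0 ht1
    have ht1' : 0 ≤ 1 - t := by linarith
    have hts : (1 - t) + t = 1 := by ring
    have hm := hmin (fun i => (1 - t) • x1 i + t • w i)
      (fun i => hXcv i (hx1 i) (hw i) ht1' ht0.le hts)
    have hFt : F (fun i => (1 - t) • x1 i + t • w i) ≤ (1 - t) * F x1 + t * F w := by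
      rw [hF, hF, hF, Finset.mul_sum, Finset.mul_sum, ← Finset.sum_add_distrib]
      exact Finset.sum_le_sum fun i _ =>
        (hf i).2 (Set.mem_univ _) (Set.mem_univ _) ht1' ht0.le hts
    have hQ : ∑ e, (δ e)⁻¹ * projK (u + tg (fun i => (1 - t) • x1 i + t • w i)) e ^ 2
        ≤ (∑ e, (δ e)⁻¹ * projK (u + tg x1) e ^ 2) + 2 * t * (y ⬝ᵥ tg w - y ⬝ᵥ tg x1)
          + t ^ 2 * ∑ e, (δ e)⁻¹ * (tg w e - tg x1 e) ^ 2 := by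
      rw [← dotProduct_sub, dotProduct, Finset.mul_sum, Finset.mul_sum, ← Finset.sum_add_distrib,
        ← Finset.sum_add_distrib]
      refine Finset.sum_le_sum fun e _ => ?_
      have hs : projK (u + tg (fun i => (1 - t) • x1 i + t • w i)) e ^ 2
          ≤ projK (u + tg x1) e ^ 2 + 2 * projK (u + tg x1) e * (t * (tg w e - tg x1 e))
            + (t * (tg w e - tg x1 e)) ^ 2 := by
        rcases e with ⟨i, j | j⟩
        · simp only [projK]
          apply aux_max
          have := (hg i j).2 (Set.mem_univ (x1 i)) (Set.mem_univ (w i)) ht1' ht0.le hts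
          simp only [smul_eq_mul] at this
          simp only [Pi.add_apply, htg1]
          linarith
        · simp only [projK]
          apply le_of_eq
          simp only [Pi.add_apply, htg2, Matrix.mulVec_add, Matrix.mulVec_smul, Pi.smul_apply,
            smul_eq_mul]
          ring
      have := mul_le_mul_of_nonneg_left hs (inv_nonneg.2 (hδ e).le)
      refine this.trans (le_of_eq ?_)
      rw [hy, Pi.sub_apply]; ring
    have hX : ∑ i, ∑ j, ((fun i => (1 - t) • x1 i + t • w i) i j - x0 i j) ^ 2
        = (∑ i, ∑ j, (x1 i j - x0 i j) ^ 2)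
          + 2 * t * (∑ i, ∑ j, (x1 i j - x0 i j) * (w i j - x1 i j))
          + t ^ 2 * ∑ i, ∑ j, (w i j - x1 i j) ^ 2 := by
      simp only [Finset.mul_sum, ← Finset.sum_add_distrib]
      refine Finset.sum_congr rfl fun i _ => Finset.sum_congr rfl fun j _ => ?_
      simp only [Pi.add_apply, Pi.smul_apply, smul_eq_mul]
      ring
    rw [hX] at hm
    nlinarith [hm, hFt, hQ]
  have hX2 : 2 * ∑ i, ∑ j, (x1 i j - x0 i j) * (w i j - x1 i j)
      = (∑ i, ∑ j, (x0 i j - w i j) ^ 2) - (∑ i, ∑ j, (x1 i j - x0 i j) ^ 2)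
      - (∑ i, ∑ j, (x1 i j - w i j) ^ 2) := by
    simp only [Finset.mul_sum, ← Finset.sum_sub_distrib]
    refine Finset.sum_congr rfl fun i _ => Finset.sum_congr rfl fun j _ => ?_
    ring
  have : α * ∑ i, ∑ j, (x1 i j - x0 i j) * (w i j - x1 i j) = α / 2 *
     ((∑ i, ∑ j, (x0 i j - w i j) ^ 2) - (∑ i, ∑ j, (x1 i j - x0 i j) ^ 2)
      - (∑ i, ∑ j, (x1 i j - w i j) ^ 2)) := by rw [← hX2]; ring
  linarith

end Steps
section Final

theorem colsum_zero {N : ℕ} {β : Type*} [Fintype β] [DecidableEq β]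
    (M : Matrix (Fin N × β) (Fin N × β) ℝ) (hM : Mᵀ = M)
    (hc : ∀ r : β → ℝ, M *ᵥ (fun e => r e.2) = 0) (w : Fin N × β → ℝ) (j : β) :
    ∑ i, (M *ᵥ w) (i, j) = 0 := by
  have h := const_dot (Pi.single j 1) (M *ᵥ w)
  rw [dot_symm M hM, hc, zero_dotProduct] at h
  simpa [Pi.single_apply] using h.symm

theorem jensen_avg {n : ℕ} (φ : (Fin n → ℝ) → ℝ) (hφ : ConvexOn ℝ Set.univ φ)
    (x : ℕ → Fin n → ℝ) (k : ℕ) (hk : 1 ≤ k) (xb : Fin n → ℝ)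
    (hxb : ∀ j, xb j = (∑ l ∈ Finset.Icc 1 k, x l j) / (k : ℝ)) :
    φ xb ≤ (∑ l ∈ Finset.Icc 1 k, φ (x l)) / (k : ℝ) := by
  have hk0 : (0 : ℝ) < k := by exact_mod_cast hk
  have h := hφ.map_sum_le (t := Finset.Icc 1 k) (w := fun _ => (1 : ℝ) / k) (p := x)
    (fun _ _ => by positivity) (by simp [hk0.ne']) (fun _ _ => Set.mem_univ _)
  have e : ∑ l ∈ Finset.Icc 1 k, ((1 : ℝ) / k) • x l = xb := by
    ext j
    rw [hxb, Finset.sum_apply, Finset.sum_div]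
    exact Finset.sum_congr rfl fun l _ => by simp [div_eq_inv_mul]
  rw [e] at h
  refine h.trans (le_of_eq ?_)
  rw [Finset.sum_div]
  exact Finset.sum_congr rfl fun l _ => by simp [div_eq_inv_mul]

end Final

theorem stmt2
    (N m p : ℕ) (hN : 1 ≤ N) (hm : 1 ≤ m) (hp : 1 ≤ p)
    (d : Fin N → ℕ)
    (X : ∀ i : Fin N, Set (Fin (d i) → ℝ))
    (hXne : ∀ i, (X i).Nonempty) (hXcl : ∀ i, IsClosed (X i))
    (hXcv : ∀ i, Convex ℝ (X i))
    (f : ∀ i : Fin N, (Fin (d i) → ℝ) → ℝ)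
    (hf : ∀ i, ConvexOn ℝ Set.univ (f i))
    (g : ∀ i : Fin N, (Fin (d i) → ℝ) → Fin m → ℝ)
    (hg : ∀ i j, ConvexOn ℝ Set.univ (fun xi => g i xi j))
    (B : ∀ i : Fin N, Matrix (Fin p) (Fin (d i)) ℝ) (c : ∀ i : Fin N, Fin p → ℝ)
    (F : (∀ i, Fin (d i) → ℝ) → ℝ) (hF : ∀ x, F x = ∑ i, f i (x i))
    (tg : (∀ i, Fin (d i) → ℝ) → Idx N m p → ℝ)
    (htg1 : ∀ x (i : Fin N) (j : Fin m), tg x (i, Sum.inl j) = g i (x i) j)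
    (htg2 : ∀ x (i : Fin N) (j : Fin p), tg x (i, Sum.inr j) = (B i *ᵥ x i + c i) j)
    (ρ : ℝ) (hρ : 0 < ρ)
    (PA PH PHt : Matrix (Fin N) (Fin N) ℝ)
    (hPA : PA.PosSemidef) (hPH : PH.PosSemidef) (hPHt : PHt.PosSemidef)
    (hDdiag : (PA + ρ • PH).IsDiag) (hDpd : (PA + ρ • PH).PosDef)
    (hHHt : (PH - PHt).PosSemidef)
    (hPHnull : ∀ v : Fin N → ℝ, PH *ᵥ v = 0 ↔ ∃ t : ℝ, v = fun _ => t)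
    (hPHtnull : ∀ v : Fin N → ℝ, PHt *ᵥ v = 0 ↔ ∃ t : ℝ, v = fun _ => t)
    (A Htld D : Matrix (Idx N m p) (Idx N m p) ℝ)
    (hA : A = PA ⊗ₖ (1 : Matrix (Blk m p) (Blk m p) ℝ))
    (hHtld : Htld = PHt ⊗ₖ (1 : Matrix (Blk m p) (Blk m p) ℝ))
    (hD : D = A + ρ • (PH ⊗ₖ (1 : Matrix (Blk m p) (Blk m p) ℝ)))
    (Hhalf : Matrix (Idx N m p) (Idx N m p) ℝ)
    (hHhalfpsd : Hhalf.PosSemidef) (hHhalfsq : Hhalf * Hhalf = Htld)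
    (Htdag : Matrix (Idx N m p) (Idx N m p) ℝ) (hHtdag : IsMPInv Htld Htdag)
    (Hhalfdag : Matrix (Idx N m p) (Idx N m p) ℝ) (hHhalfdag : IsMPInv Hhalf Hhalfdag)
    (lam1 : ℝ)
    (hlam1ev : ∃ v : Fin N → ℝ, v ≠ 0 ∧ PA *ᵥ v = lam1 • v)
    (hlam1max : ∀ (μ : ℝ) (v : Fin N → ℝ), v ≠ 0 → PA *ᵥ v = μ • v → μ ≤ lam1)
    (x : ℕ → ∀ i, Fin (d i) → ℝ) (y z : ℕ → Idx N m p → ℝ)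
    (hxX : ∀ k, ∀ i, x (k + 1) i ∈ X i)
    (hy0 : memK (y 0))
    (hyupd : ∀ k, y (k + 1) = projK (D⁻¹ *ᵥ ((A *ᵥ y k) - (Hhalf *ᵥ z k) + tg (x (k + 1)))))
    (hzupd : ∀ k, z (k + 1) = z k + ρ • (Hhalf *ᵥ y (k + 1)))
    (α : ℝ) (hα : 0 < α)
    (hxmin : ∀ k, ∀ w, (∀ i, w i ∈ X i) →
      F (x (k + 1))
          + (1 / 2) * quadForm D⁻¹ (projK ((A *ᵥ y k) - (Hhalf *ᵥ z k) + tg (x (k + 1))))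
          + (α / 2) * ∑ i, ∑ j, (x (k + 1) i j - x k i j) ^ 2
        ≤ F w + (1 / 2) * quadForm D⁻¹ (projK ((A *ᵥ y k) - (Hhalf *ᵥ z k) + tg w))
          + (α / 2) * ∑ i, ∑ j, (w i j - x k i j) ^ 2)
    (xs : ∀ i, Fin (d i) → ℝ) (hxsX : ∀ i, xs i ∈ X i)
    (hxsg : ∀ j, (∑ i, g i (xs i) j) ≤ 0)
    (hxsh : ∀ j, (∑ i, (B i *ᵥ xs i + c i) j) = 0)
    (mus : Fin m → ℝ) (hmus : ∀ j, 0 ≤ mus j) (lams : Fin p → ℝ)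
    (hcs : (∑ j, mus j * ∑ i, g i (xs i) j) = 0)
    (hsaddle : ∀ w, (∀ i, w i ∈ X i) →
      F xs + (∑ j, mus j * ∑ i, g i (xs i) j) + (∑ j, lams j * ∑ i, (B i *ᵥ xs i + c i) j)
        ≤ F w + (∑ j, mus j * ∑ i, g i (w i) j) + (∑ j, lams j * ∑ i, (B i *ᵥ w i + c i) j))
    (ys : Idx N m p → ℝ) (hys : ∀ (i : Fin N) (j : Blk m p), ys (i, j) = Sum.elim mus lams j)
    (zstar vstar : Idx N m p → ℝ)
    (hzstar : zstar = Hhalfdag *ᵥ tg xs)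
    (hvstar : vstar = Hhalf *ᵥ zstar)
    (xbar : ℕ → ∀ i, Fin (d i) → ℝ)
    (hxbar : ∀ k (i : Fin N) (j : Fin (d i)),
      xbar k i j = (∑ l ∈ Finset.Icc 1 k, x l i j) / (k : ℝ))
    (C1 C2 : ℝ)
    (hC1 : C1 = Real.sqrt ((N : ℝ) * lam1) * Real.sqrt ((∑ j, (mus j) ^ 2) + ∑ j, (lams j) ^ 2))
    (hC2 : C2 = Real.sqrt ((Real.sqrt (quadForm A (y 0)) + C1) ^ 2
      + α * (∑ i, ∑ j, (x 0 i j - xs i j) ^ 2)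
      + (1 / ρ) * quadForm Htdag ((Hhalf *ᵥ z 0) - vstar)))
    :
    ∀ k : ℕ, 1 ≤ k →
      Real.sqrt ((∑ j : Fin m, (max (∑ i, g i (xbar k i) j) 0) ^ 2)
          + ∑ j : Fin p, (∑ i, (B i *ᵥ xbar k i + c i) j) ^ 2)
        ≤ Real.sqrt ((N : ℝ) * lam1) / (k : ℝ) *
          (Real.sqrt (quadForm A (y 0)) + C1 + C2) := by
  have hsymA : Aᵀ = A := by rw [hA]; exact psd_symm _ (kron_psd PA hPA)
  have hApsd : A.PosSemidef := by rw [hA]; exact kron_psd PA hPA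
  have hHtpsd : Htld.PosSemidef := by rw [hHtld]; exact kron_psd PHt hPHt
  have hsymHt : Htldᵀ = Htld := psd_symm _ hHtpsd
  have hsymHh : Hhalfᵀ = Hhalf := psd_symm _ hHhalfpsd
  have hDk : D = (PA + ρ • PH) ⊗ₖ (1 : Matrix (Blk m p) (Blk m p) ℝ) := by
    rw [hD, hA, Matrix.add_kronecker, Matrix.smul_kronecker]
  obtain ⟨H, hH⟩ : ∃ H : Matrix (Idx N m p) (Idx N m p) ℝ,
      H = PH ⊗ₖ (1 : Matrix (Blk m p) (Blk m p) ℝ) := ⟨_, rfl⟩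
  rw [← hH] at hD
  have hsymH : Hᵀ = H := by rw [hH]; exact psd_symm _ (kron_psd PH hPH)
  have hHdiff : (H - Htld).PosSemidef := by
    have : H - Htld = (PH - PHt) ⊗ₖ (1 : Matrix (Blk m p) (Blk m p) ℝ) := by
      rw [hH, hHtld]
      ext ⟨i, j⟩ ⟨i', j'⟩
      simp [Matrix.kroneckerMap_apply, sub_mul]
    rw [this]
    exact kron_psd _ hHHt
  have hHc : ∀ r : Blk m p → ℝ, H *ᵥ (fun e => r e.2) = 0 := by
    intro r; rw [hH]; exact kron_const PH hPHnull r
  have hHtc : ∀ r : Blk m p → ℝ, Htld *ᵥ (fun e => r e.2) = 0 := by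
    intro r; rw [hHtld]; exact kron_const PHt hPHtnull r
  obtain ⟨δ, hδ, hδ1, hδ2⟩ := diag_D (β := Blk m p) _ hDdiag hDpd
  rw [← hDk] at hδ1 hδ2
  have hrange : Hhalf = Htld * Hhalfdagᵀ := by
    have := mp_range Hhalf Hhalfdag hsymHh hHhalfdag
    rwa [hHhalfsq] at this
  have hysc : ys = fun e => Sum.elim mus lams e.2 := by
    ext ⟨i, j⟩; exact hys i j
  -- steps
  have hys' : ∀ k, memK (y (k + 1)) ∧
      (∀ e, y (k + 1) e = (δ e)⁻¹ * projK ((A *ᵥ y k) - (Hhalf *ᵥ z k) + tg (x (k + 1))) e) ∧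
      ∃ s : Idx N m p → ℝ, memK s ∧ (∀ i j, s (i, Sum.inr j) = 0) ∧
        (∀ e, y (k + 1) e * s e = 0) ∧
        D *ᵥ y (k + 1) = (A *ᵥ y k) - (Hhalf *ᵥ z k) + tg (x (k + 1)) + s := by
    intro k
    have h := y_step δ ((A *ᵥ y k) - (Hhalf *ᵥ z k) + tg (x (k + 1))) (y (k + 1)) hδ
      (by rw [← hδ2]; exact hyupd k)
    rwa [← hδ1] at h
  -- dual variable in the range of Htld
  obtain ⟨q, hq0, hq1⟩ : ∃ q : ℕ → Idx N m p → ℝ,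
      q 0 = Hhalfdagᵀ *ᵥ (z 0 - zstar) ∧ ∀ k, q (k + 1) = q k + ρ • y (k + 1) :=
    ⟨fun k => Nat.rec (Hhalfdagᵀ *ᵥ (z 0 - zstar)) (fun n r => r + ρ • y (n + 1)) k,
      rfl, fun _ => rfl⟩
  have hv : ∀ k, Hhalf *ᵥ z k - vstar = Htld *ᵥ q k := by
    intro k
    induction k with
    | zero =>
      rw [hq0, Matrix.mulVec_mulVec, ← hrange, hvstar, Matrix.mulVec_sub]
    | succ k ih =>
      rw [hq1, hzupd, Matrix.mulVec_add, Matrix.mulVec_add, ← ih, Matrix.mulVec_smul,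
        Matrix.mulVec_smul, Matrix.mulVec_mulVec, hHhalfsq]
      abel
  have hvc : ∀ w, ∀ j, ∑ i, (Hhalf *ᵥ w) (i, j) = 0 := by
    intro w j
    rw [hrange, ← Matrix.mulVec_mulVec]
    exact colsum_zero Htld hsymHt hHtc _ j
  have hysv : ∀ w, ys ⬝ᵥ (Hhalf *ᵥ w) = 0 := by
    intro w
    rw [hysc, const_dot]
    simp [hvc]
  -- decomposition of tg xs
  have htgs : ∀ w, memK w → w ⬝ᵥ tg xs ≤ w ⬝ᵥ vstar := by
    intro w hw
    have hker : Htld *ᵥ (tg xs - vstar) = 0 := by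
      rw [hvstar, hzstar, ← hHhalfsq, Matrix.mulVec_sub, Matrix.mulVec_mulVec,
        Matrix.mulVec_mulVec, Matrix.mul_assoc (Hhalf * Hhalf), Matrix.mul_assoc Hhalf Hhalf (Hhalf * Hhalfdag), mp_proj Hhalf Hhalfdag hsymHh hHhalfdag, sub_self]
    rw [hHtld] at hker
    obtain ⟨r, hr⟩ := kron_ker PHt hPHtnull _ hker
    have hN0 : (0 : ℝ) < N := by exact_mod_cast hN
    have hrs : ∀ j, (N : ℝ) * r j = ∑ i, tg xs (i, j) := by
      intro j
      have h1 : ∑ i, (tg xs - vstar) (i, j) = N * r j := by rw [hr]; simp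
      rw [← h1]
      simp only [Pi.sub_apply, Finset.sum_sub_distrib, hvstar, hvc, sub_zero]
    have hr1 : ∀ j, r (Sum.inl j) ≤ 0 := by
      intro j
      have h1 := hrs (Sum.inl j)
      simp only [htg1] at h1
      have h2 := hxsg j
      by_contra hcon
      push Not at hcon
      have := mul_pos hN0 hcon
      linarith
    have hr2 : ∀ j, r (Sum.inr j) = 0 := by
      intro j
      have h1 := hrs (Sum.inr j)
      simp only [htg2] at h1
      rw [hxsh] at h1
      exact (mul_eq_zero.mp h1).resolve_left hN0.ne'
    have : w ⬝ᵥ (tg xs - vstar) ≤ 0 := by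
      rw [hr]
      apply Finset.sum_nonpos
      rintro ⟨i, j | j⟩ _
      · exact mul_nonpos_of_nonneg_of_nonpos (hw i j) (hr1 j)
      · simp [hr2]
    rw [dotProduct_sub] at this
    linarith
  have hystg : ∀ w, ys ⬝ᵥ tg w = (∑ j, mus j * ∑ i, g i (w i) j)
      + ∑ j, lams j * ∑ i, (B i *ᵥ w i + c i) j := by
    intro w
    rw [hysc, const_dot, Fintype.sum_sum_type]
    simp only [Sum.elim_inl, Sum.elim_inr, htg1, htg2]
  -- g̃ identity
  have hid : ∀ k (s : Idx N m p → ℝ),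
      D *ᵥ y (k + 1) = (A *ᵥ y k) - (Hhalf *ᵥ z k) + tg (x (k + 1)) + s →
      tg (x (k + 1)) = A *ᵥ (y (k + 1) - y k) + ρ • (H *ᵥ y (k + 1)) + Hhalf *ᵥ z k - s := by
    intro k s h
    rw [hD, Matrix.add_mulVec, Matrix.smul_mulVec] at h
    rw [Matrix.mulVec_sub]
    have : tg (x (k + 1)) = (A *ᵥ y k - Hhalf *ᵥ z k + tg (x (k + 1)) + s)
      - A *ᵥ y k + Hhalf *ᵥ z k - s := by abel
    rw [this, ← h]
    abel
  -- Lyapunov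
  obtain ⟨V, hV⟩ : ∃ V : ℕ → ℝ, ∀ k, V k = quadForm A (y k - ys)
      + α * (∑ i, ∑ j, (x k i j - xs i j) ^ 2) + (1 / ρ) * quadForm Htld (q k) := ⟨_, fun _ => rfl⟩
  have hstep : ∀ k, V (k + 1) ≤ V k := by
    intro k
    obtain ⟨hyK, hyp, s, hsK, hs0, hys0, hDy⟩ := hys' k
    have hopt := x_step d X hXcv f hf g hg B c F hF tg htg1 htg2 δ
      ((A *ᵥ y k) - (Hhalf *ᵥ z k)) (y (k + 1)) hδ (x k) (x (k + 1)) (hxX k) hyp α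
      (by rw [← hδ2]; exact hxmin k) xs hxsX
    have hsad := hsaddle (x (k + 1)) (hxX k)
    rw [add_assoc, add_assoc, ← hystg, ← hystg] at hsad
    have hys_xs : ys ⬝ᵥ tg xs = 0 := by
      rw [hystg, hcs]; simp only [hxsh, mul_zero, Finset.sum_const_zero, add_zero]
    have htgle := htgs _ hyK
    have hg1 := hid k s hDy
    have hexp : (y (k + 1) - ys) ⬝ᵥ tg (x (k + 1))
        = (y (k + 1) - ys) ⬝ᵥ (A *ᵥ (y (k + 1) - y k)) + ρ * (y (k + 1) ⬝ᵥ (H *ᵥ y (k + 1)))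
          + y (k + 1) ⬝ᵥ (Hhalf *ᵥ z k) + ys ⬝ᵥ s := by
      have e1 : ys ⬝ᵥ (H *ᵥ y (k + 1)) = 0 := by
        rw [dot_symm H hsymH, hysc, hHc, zero_dotProduct]
      have e2 : y (k + 1) ⬝ᵥ s = 0 := Finset.sum_eq_zero fun e _ => hys0 e
      rw [hg1, dotProduct_sub, dotProduct_add, dotProduct_add, dotProduct_smul,
        sub_dotProduct _ _ (H *ᵥ y (k + 1)), sub_dotProduct _ _ s,
        sub_dotProduct _ _ (Hhalf *ᵥ z k), e1, e2, hysv, smul_eq_mul]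
      ring
    have hyss : 0 ≤ ys ⬝ᵥ s := by
      apply Finset.sum_nonneg
      rintro ⟨i, j | j⟩ _
      · rw [hys]; exact mul_nonneg (hmus j) (hsK i j)
      · rw [hs0]; simp
    have hHd : y (k + 1) ⬝ᵥ (Htld *ᵥ y (k + 1)) ≤ y (k + 1) ⬝ᵥ (H *ᵥ y (k + 1)) := by
      have := qf_nonneg _ hHdiff (y (k + 1))
      rw [quadForm, Matrix.sub_mulVec, dotProduct_sub] at this
      linarith
    have hHd' := mul_le_mul_of_nonneg_left hHd hρ.le
    have hvd : y (k + 1) ⬝ᵥ (Hhalf *ᵥ z k) - y (k + 1) ⬝ᵥ vstar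
        + ρ * (y (k + 1) ⬝ᵥ (Htld *ᵥ y (k + 1))) = y (k + 1) ⬝ᵥ (Htld *ᵥ q (k + 1)) := by
      rw [← dotProduct_sub, hv, hq1, Matrix.mulVec_add, Matrix.mulVec_smul, dotProduct_add,
        dotProduct_smul, smul_eq_mul]
    have hqp := qf_polar Htld hsymHt (q (k + 1)) (q k)
    have hqd : q (k + 1) - q k = ρ • y (k + 1) := by rw [hq1]; abel
    have hqn := qf_nonneg _ hHtpsd (q (k + 1) - q k)
    have hqe : q (k + 1) ⬝ᵥ (Htld *ᵥ (q (k + 1) - q k))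
        = ρ * (y (k + 1) ⬝ᵥ (Htld *ᵥ q (k + 1))) := by
      rw [hqd, Matrix.mulVec_smul, dotProduct_smul, smul_eq_mul, dot_symm _ hsymHt,
        dotProduct_comm]
    have hyp2 := qf_polar A hsymA (y (k + 1) - ys) (y k - ys)
    have hyn := qf_nonneg _ hApsd (y (k + 1) - y k)
    rw [sub_sub_sub_cancel_right] at hyp2
    rw [sub_dotProduct] at hexp
    have hxn : 0 ≤ ∑ i, ∑ j, (x (k + 1) i j - x k i j) ^ 2 :=
      Finset.sum_nonneg fun i _ => Finset.sum_nonneg fun j _ => sq_nonneg _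
    have hxn' := mul_nonneg hα.le hxn
    have hq' : (1 / ρ) * quadForm Htld (q (k + 1)) ≤ (1 / ρ) * quadForm Htld (q k)
        + 2 * (y (k + 1) ⬝ᵥ (Htld *ᵥ q (k + 1))) := by
      have h1 : quadForm Htld (q (k + 1)) ≤ quadForm Htld (q k)
        + 2 * (ρ * (y (k + 1) ⬝ᵥ (Htld *ᵥ q (k + 1)))) := by linarith
      have h2 := mul_le_mul_of_nonneg_left h1 (by positivity : 0 ≤ 1 / ρ)
      refine h2.trans (le_of_eq ?_)
      field_simp
    rw [hV, hV]
    linarith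
  have hVle : ∀ k, V k ≤ V 0 := by
    intro k
    induction k with
    | zero => exact le_rfl
    | succ k ih => exact (hstep k).trans ih
  have hl := lam1_nonneg PA hPA lam1 hlam1ev
  have hysA : Real.sqrt (quadForm A ys) ≤ C1 := by
    rw [hC1, ← Real.sqrt_mul (by positivity)]
    apply Real.sqrt_le_sqrt
    have := kron_rayleigh (β := Blk m p) PA hPA lam1 hlam1max (Sum.elim mus lams)
    rw [Fintype.sum_sum_type] at this
    rw [hysc, hA]
    exact this
  have hV0 : V 0 ≤ (Real.sqrt (quadForm A (y 0)) + C1) ^ 2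
      + α * (∑ i, ∑ j, (x 0 i j - xs i j) ^ 2)
      + (1 / ρ) * quadForm Htdag ((Hhalf *ᵥ z 0) - vstar) := by
    have h1 : quadForm Htdag ((Hhalf *ᵥ z 0) - vstar) = quadForm Htld (q 0) := by
      rw [hv, quadForm, quadForm, ← dot_symm Htld hsymHt, Matrix.mulVec_mulVec,
        Matrix.mulVec_mulVec, hHtdag.1]
    have h2 : quadForm A (y 0 - ys) ≤ (Real.sqrt (quadForm A (y 0)) + C1) ^ 2 := by
      have h3 := (qf_tri A hApsd (y 0) ys).trans (add_le_add_right hysA _)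
      rw [← Real.sq_sqrt (qf_nonneg A hApsd (y 0 - ys))]
      exact pow_le_pow_left₀ (Real.sqrt_nonneg _) h3 2
    rw [hV, h1]
    linarith
  intro k hk
  have hk0 : (0 : ℝ) < k := by exact_mod_cast hk
  have hyk : Real.sqrt (quadForm A (y k - ys)) ≤ C2 := by
    rw [hC2]
    apply Real.sqrt_le_sqrt
    refine le_trans ?_ ((hVle k).trans hV0)
    have h1 : 0 ≤ α * ∑ i, ∑ j, (x k i j - xs i j) ^ 2 :=
      mul_nonneg hα.le (Finset.sum_nonneg fun i _ => Finset.sum_nonneg fun j _ => sq_nonneg _)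
    have h2 : 0 ≤ (1 / ρ) * quadForm Htld (q k) :=
      mul_nonneg (by positivity) (qf_nonneg _ hHtpsd _)
    rw [hV]; linarith
  have hw : Real.sqrt (quadForm A (y k - y 0)) ≤ Real.sqrt (quadForm A (y 0)) + C1 + C2 := by
    have h1 := qf_tri A hApsd (y k - ys) (y 0 - ys)
    rw [sub_sub_sub_cancel_right] at h1
    have h2 := qf_tri A hApsd (y 0) ys
    linarith
  have hcol : ∀ k (j : Blk m p), ∃ t : ℝ, 0 ≤ t ∧ ((∃ j', j = Sum.inr j') → t = 0) ∧
      (∑ l ∈ Finset.Icc 1 k, ∑ i, tg (x l) (i, j)) + t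
        = ∑ i, (A *ᵥ (y k - y 0)) (i, j) := by
    intro k j
    induction k with
    | zero => exact ⟨0, le_rfl, fun _ => rfl, by simp⟩
    | succ k ih =>
      obtain ⟨t, ht, ht0, he⟩ := ih
      obtain ⟨hyK, hyp, s, hsK, hs0, hys0, hDy⟩ := hys' k
      refine ⟨t + ∑ i, s (i, j), add_nonneg ht (Finset.sum_nonneg fun i _ => ?_), ?_, ?_⟩
      · rcases j with j | j
        · exact hsK i j
        · rw [hs0]
      · rintro ⟨j', rfl⟩
        simp [ht0 ⟨j', rfl⟩, hs0]
      · rw [Finset.sum_Icc_succ_top (by omega), hid k s hDy]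
        have h1 : y (k + 1) - y 0 = (y (k + 1) - y k) + (y k - y 0) := by abel
        rw [h1, Matrix.mulVec_add]
        simp only [Pi.add_apply, Pi.sub_apply, Pi.smul_apply, Finset.sum_add_distrib,
          Finset.sum_sub_distrib, smul_eq_mul, ← Finset.mul_sum, hvc,
          colsum_zero H hsymH hHc]
        rw [← he]
        ring
  have hfin : (∑ j : Fin m, (max (∑ i, g i (xbar k i) j) 0) ^ 2)
      + ∑ j : Fin p, (∑ i, (B i *ᵥ xbar k i + c i) j) ^ 2
      ≤ (1 / (k : ℝ)) ^ 2 * ∑ j, (∑ i, (A *ᵥ (y k - y 0)) (i, j)) ^ 2 := by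
    rw [Fintype.sum_sum_type, mul_add, Finset.mul_sum, Finset.mul_sum]
    apply add_le_add
    · refine Finset.sum_le_sum fun j _ => ?_
      obtain ⟨t, ht, -, he⟩ := hcol k (Sum.inl j)
      set R := ∑ i, (A *ᵥ (y k - y 0)) (i, Sum.inl j)
      have h1 : ∑ i, g i (xbar k i) j ≤ (1 / (k : ℝ)) * R := by
        have h2 : ∑ i, g i (xbar k i) j
            ≤ ∑ i, (∑ l ∈ Finset.Icc 1 k, g i (x l i) j) / (k : ℝ) :=
          Finset.sum_le_sum fun i _ => jensen_avg (fun xi => g i xi j) (hg i j)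
            (fun l => x l i) k hk _ (fun j' => hxbar k i j')
        rw [← Finset.sum_div, Finset.sum_comm] at h2
        simp only [htg1] at he
        refine h2.trans ?_
        rw [div_eq_inv_mul, one_div]
        exact mul_le_mul_of_nonneg_left (by linarith) (by positivity)
      rw [← mul_pow]
      rcases le_total (∑ i, g i (xbar k i) j) 0 with h0 | h0
      · rw [max_eq_right h0, zero_pow two_ne_zero]
        exact sq_nonneg _
      · rw [max_eq_left h0]
        exact pow_le_pow_left₀ h0 h1 2
    · refine Finset.sum_le_sum fun j _ => ?_
      obtain ⟨t, -, ht, he⟩ := hcol k (Sum.inr j)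
      rw [ht ⟨j, rfl⟩, add_zero] at he
      rw [← he, ← mul_pow]
      apply le_of_eq
      congr 1
      simp only [htg2]
      rw [Finset.sum_comm, Finset.mul_sum]
      refine Finset.sum_congr rfl fun i _ => ?_
      have hx : xbar k i = (1 / (k : ℝ)) • ∑ l ∈ Finset.Icc 1 k, x l i := by
        ext j'
        rw [hxbar]; simp [div_eq_inv_mul]
      rw [hx, Matrix.mulVec_smul, Matrix.mulVec_sum]
      simp only [Pi.add_apply, Pi.smul_apply, smul_eq_mul, Finset.sum_apply,
        Finset.sum_add_distrib, Finset.sum_const, Nat.card_Icc, nsmul_eq_mul]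
      rw [Nat.add_sub_cancel]
      field_simp
  have hcb := col_bound (β := Blk m p) PA hPA lam1 hlam1max hl (y k - y 0)
  rw [← hA] at hcb
  calc _ ≤ Real.sqrt ((1 / (k : ℝ)) ^ 2 * ∑ j, (∑ i, (A *ᵥ (y k - y 0)) (i, j)) ^ 2) :=
        Real.sqrt_le_sqrt hfin
    _ = (1 / (k : ℝ)) * Real.sqrt (∑ j, (∑ i, (A *ᵥ (y k - y 0)) (i, j)) ^ 2) := by
        rw [Real.sqrt_mul (by positivity), Real.sqrt_sq (by positivity)]
    _ ≤ (1 / (k : ℝ)) * (Real.sqrt (N * lam1) * (Real.sqrt (quadForm A (y 0)) + C1 + C2)) := by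
        apply mul_le_mul_of_nonneg_left _ (by positivity)
        exact hcb.trans (mul_le_mul_of_nonneg_left hw (Real.sqrt_nonneg _))
    _ = _ := by ring
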